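/- Let (A, m) be a noetherian local ring, M a finitely generated A-module, J an m-primary ideal, and I an ideal of A with ht((I + Ann_A M)/Ann_A M) > 0. Suppose R is a set of elements of J generating an ideal (R) such that (R)J^n I^u M = J^{n+1} I^u M for some fixed u and all sufficiently large n (i.e., (R) is a reduction of J with respect to I^u M). Then e_A(J, M) = e_A((R), M), where both multiplicities are Hilbert–Samuel multiplicities on M. -/

import Mathlib

open IsLocalRing

section MixedMultDefs

variable (A : Type*) [CommRing A]

/-- The length of an `A`-module `M`, defined as the height of `⊤` in the lattice of
submodules of `M` (i.e. the supremum of lengths of chains of submodules). -/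
noncomputable def modLength (M : Type*) [AddCommGroup M] [Module A M] : ℕ∞ :=
  Order.height (⊤ : Submodule A M)

/-- The length of a module as a natural number (`0` if the length is infinite). -/
noncomputable def lenNat (M : Type*) [AddCommGroup M] [Module A M] : ℕ :=
  (modLength A M).toNat

/-- The height of an ideal: the infimum of the heights of the prime ideals containing it. -/
noncomputable def idealHeight (I : Ideal A) : ℕ∞ :=
  ⨅ (p : PrimeSpectrum A) (_ : I ≤ p.asIdeal), Order.height p

/-- The Krull dimension of a module `M`, i.e. the Krull dimension of `A / Ann_A M`. -/
noncomputable def modDim (M : Type*) [AddCommGroup M] [Module A M] : WithBot ℕ∞ :=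
  ringKrullDim (A ⧸ Module.annihilator A M)

/-- `x` is a Rees superficial element of the family of ideals `I = (I 0, …, I (t-1))` with
respect to `M`, as an element of the ideal `I i`:  `x ∈ I i` and
`xM ∩ I_1^{n_1} ⋯ I_i^{n_i + 1} ⋯ I_t^{n_t} M = x I_1^{n_1} ⋯ I_i^{n_i} ⋯ I_t^{n_t} M`
for all sufficiently large `n i` and arbitrary other exponents. -/
def IsReesSuperficial (M : Type*) [AddCommGroup M] [Module A M] {t : ℕ}
    (I : Fin t → Ideal A) (i : Fin t) (x : A) : Prop :=
  x ∈ I i ∧ ∃ N : ℕ, ∀ n : Fin t → ℕ, N ≤ n i →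
    (Ideal.span {x} • (⊤ : Submodule A M)) ⊓
        ((∏ j, I j ^ (n j + if j = i then 1 else 0)) • (⊤ : Submodule A M)) =
      Ideal.span {x} • ((∏ j, I j ^ (n j)) • (⊤ : Submodule A M))

/-- `x 0, …, x (t-1)` is a Rees superficial sequence of the family `I` with respect to `M`,
where the assignment `c` records to which ideal each element of the sequence belongs:
`x i` is a Rees superficial element of `I`, as an element of `I (c i)`, with respect to
`M / (x 0, …, x (i-1)) M`. -/
def IsReesSuperficialSeq (M : Type*) [AddCommGroup M] [Module A M] {t s : ℕ}
    (I : Fin s → Ideal A) (x : Fin t → A) (c : Fin t → Fin s) : Prop :=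
  ∀ i : Fin t,
    IsReesSuperficial A
      (M ⧸ ((Ideal.span (x '' {j | (j : ℕ) < (i : ℕ)})) • (⊤ : Submodule A M)))
      I (c i) (x i)

/-- The assignment `c` has type `(k 0, …, k (s-1))`: for each `i`, exactly `k i` members of
the sequence are assigned to the ideal indexed by `i`. -/
def OfTypeCount {t s : ℕ} (c : Fin t → Fin s) (k : Fin s → ℕ) : Prop :=
  ∀ i : Fin s, (Finset.univ.filter fun j => c j = i).card = k i

/-- The ideal generated by the members of the sequence `x` assigned (by `c`) to index `i`. -/
def jrIdeal {t s : ℕ} (x : Fin t → A) (c : Fin t → Fin s) (i : Fin s) : Ideal A :=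
  Ideal.span (x '' {j | c j = i})

/-- The defining equation of a joint reduction:  all members of the sequence lie in their
assigned ideals, and `I_1^{n_1+1} ⋯ I_s^{n_s+1} M = Σ_i (𝔍_i) I_1^{n_1+1} ⋯ I_i^{n_i} ⋯
I_s^{n_s+1} M` for all sufficiently large `n_1, …, n_s`, where `𝔍_i` consists of the
members of the sequence assigned to `I i`. -/
def IsJointReductionEq (M : Type*) [AddCommGroup M] [Module A M] {t s : ℕ}
    (I : Fin s → Ideal A) (x : Fin t → A) (c : Fin t → Fin s) : Prop :=
  (∀ j, x j ∈ I (c j)) ∧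
  ∃ N : ℕ, ∀ n : Fin s → ℕ, (∀ i, N ≤ n i) →
    ((∏ i, I i ^ (n i + 1)) • (⊤ : Submodule A M)) =
      ∑ i : Fin s, jrIdeal A x c i •
        ((∏ j, I j ^ (n j + if j = i then 0 else 1)) • (⊤ : Submodule A M))

/-- A joint reduction of the family `I` with respect to `M` of type `k`. -/
def IsJointReduction (M : Type*) [AddCommGroup M] [Module A M] {t s : ℕ}
    (I : Fin s → Ideal A) (x : Fin t → A) (c : Fin t → Fin s) (k : Fin s → ℕ) : Prop :=
  IsJointReductionEq A M I x c ∧ OfTypeCount c k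

/-- `x 1, …, x d` is a system of parameters for `M`:  `d = dim M`, the `x j` lie in the
maximal ideal, and `M / (x 1, …, x d) M` has finite length. -/
def IsSOP [IsLocalRing A] (M : Type*) [AddCommGroup M] [Module A M] {d : ℕ}
    (x : Fin d → A) : Prop :=
  modDim A M = (d : ℕ∞) ∧ (∀ j, x j ∈ maximalIdeal A) ∧
    IsFiniteLength A (M ⧸ ((Ideal.span (Set.range x)) • (⊤ : Submodule A M)))

/-- `e` is the Hilbert–Samuel multiplicity of the ideal `q` on the `d`-dimensional module
`M`: the function `n ↦ ℓ_A(M / q^n M)` is eventually given by a polynomial of degree at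
most `d` with `n^d`-coefficient `e / d!`. -/
def IsHSMult (M : Type*) [AddCommGroup M] [Module A M] (q : Ideal A) (d : ℕ) (e : ℕ) :
    Prop :=
  ∃ P : Polynomial ℚ, P.natDegree ≤ d ∧
    (∃ N : ℕ, ∀ n : ℕ, N ≤ n →
      IsFiniteLength A (M ⧸ (q ^ n • (⊤ : Submodule A M))) ∧
      (lenNat A (M ⧸ (q ^ n • (⊤ : Submodule A M))) : ℚ) = P.eval (n : ℚ)) ∧
    (e : ℚ) = P.coeff d * (Nat.factorial d : ℚ)

/-- The subquotient `J^{n_0} I_1^{n_1} ⋯ I_s^{n_s} M / J^{n_0+1} I_1^{n_1} ⋯ I_s^{n_s} M`. -/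
abbrev mixedSub (M : Type*) [AddCommGroup M] [Module A M] {s : ℕ} (J : Ideal A)
    (I : Fin s → Ideal A) (n : Fin (s + 1) → ℕ) : Submodule A M :=
  (J ^ (n 0) * ∏ i : Fin s, I i ^ (n i.succ)) • (⊤ : Submodule A M)

/-- continued -/
abbrev mixedPiece (M : Type*) [AddCommGroup M] [Module A M] {s : ℕ} (J : Ideal A)
    (I : Fin s → Ideal A) (n : Fin (s + 1) → ℕ) :=
  ↥(mixedSub A M J I n) ⧸
    (Submodule.comap (mixedSub A M J I n).subtype
      ((J ^ (n 0 + 1) * ∏ i : Fin s, I i ^ (n i.succ)) • (⊤ : Submodule A M)))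

/-- `e` is the mixed multiplicity `e_A(J^{[k_0+1]}, I_1^{[k_1]}, …, I_s^{[k_s]}; M)`:
the function `(n_0, …, n_s) ↦ ℓ_A(J^{n_0} I_1^{n_1} ⋯ I_s^{n_s} M / J^{n_0+1} I_1^{n_1}
⋯ I_s^{n_s} M)` is, for all sufficiently large `n_0, …, n_s`, given by a polynomial of
total degree at most `k_0 + k_1 + ⋯ + k_s` whose coefficient of
`n_0^{k_0} n_1^{k_1} ⋯ n_s^{k_s}` is `e / (k_0! k_1! ⋯ k_s!)`. -/
def IsMixedMult (M : Type*) [AddCommGroup M] [Module A M] {s : ℕ} (J : Ideal A)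
    (I : Fin s → Ideal A) (k0 : ℕ) (k : Fin s → ℕ) (e : ℕ) : Prop :=
  ∃ P : MvPolynomial (Fin (s + 1)) ℚ, P.totalDegree ≤ k0 + ∑ i, k i ∧
    (∃ N : ℕ, ∀ n : Fin (s + 1) → ℕ, (∀ i, N ≤ n i) →
      IsFiniteLength A (mixedPiece A M J I n) ∧
      (lenNat A (mixedPiece A M J I n) : ℚ) =
        MvPolynomial.eval (fun i => (n i : ℚ)) P) ∧
    (e : ℚ) = MvPolynomial.coeff (Finsupp.equivFunOnFinite.symm (Fin.cons k0 k)) P *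
      ((Nat.factorial k0 * ∏ i, Nat.factorial (k i) : ℕ) : ℚ)

/-- `e` is the mixed multiplicity `e_A(I_1^{[k_1]}, …, I_s^{[k_s]}; M)` of a family of
`m`-primary ideals: the function `(n_1, …, n_s) ↦ ℓ_A(M / I_1^{n_1} ⋯ I_s^{n_s} M)` is, for
all sufficiently large `n_1, …, n_s`, given by a polynomial of total degree at most
`k_1 + ⋯ + k_s` whose coefficient of `n_1^{k_1} ⋯ n_s^{k_s}` is `e / (k_1! ⋯ k_s!)`. -/
def IsMixedMultPrimary (M : Type*) [AddCommGroup M] [Module A M] {s : ℕ}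
    (I : Fin s → Ideal A) (k : Fin s → ℕ) (e : ℕ) : Prop :=
  ∃ P : MvPolynomial (Fin s) ℚ, P.totalDegree ≤ ∑ i, k i ∧
    (∃ N : ℕ, ∀ n : Fin s → ℕ, (∀ i, N ≤ n i) →
      IsFiniteLength A (M ⧸ ((∏ i, I i ^ (n i)) • (⊤ : Submodule A M))) ∧
      (lenNat A (M ⧸ ((∏ i, I i ^ (n i)) • (⊤ : Submodule A M))) : ℚ) =
        MvPolynomial.eval (fun i => (n i : ℚ)) P) ∧
    (e : ℚ) = MvPolynomial.coeff (Finsupp.equivFunOnFinite.symm k) P *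
      ((∏ i, Nat.factorial (k i) : ℕ) : ℚ)

/-- The submodule `(0_M : I^∞) = ⋃_n (0_M : I^n)` of `M`. -/
def satSub (M : Type*) [AddCommGroup M] [Module A M] (I : Ideal A) : Submodule A M :=
  ⨆ n : ℕ, Submodule.torsionBySet A M ((I ^ n : Ideal A) : Set A)

/-- A polynomial function on an `A`-module `V` with values in the residue field of `A`:
an element of the subalgebra of functions generated by the linear ones. -/
def IsPolyFun [IsLocalRing A] (V : Type*) [AddCommGroup V] [Module A V]
    (f : V → ResidueField A) : Prop :=
  f ∈ Algebra.adjoin A {g : V → ResidueField A | ∃ l : V →ₗ[A] ResidueField A, g = ⇑l}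

/-- A Zariski open subset of an `A`-module `V` (for `V` a finite-dimensional vector space
over the residue field, this is the usual Zariski topology): the complement of the common
zero locus of a set of polynomial functions. -/
def IsZariskiOpen [IsLocalRing A] (V : Type*) [AddCommGroup V] [Module A V]
    (U : Set V) : Prop :=
  ∃ S : Set (V → ResidueField A), (∀ f ∈ S, IsPolyFun A V f) ∧
    U = {v | ∃ f ∈ S, f v ≠ 0}

end MixedMultDefs

section
variable {A : Type*} [CommRing A] {M : Type*} [AddCommGroup M] [Module A M]

lemma L_mono {S T : Submodule A M} (h : S ≤ T) :
    Module.length A (M ⧸ T) ≤ Module.length A (M ⧸ S) :=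
  Module.length_le_of_surjective (Submodule.factor h) (Submodule.factor_surjective h)

lemma length_le_of_rexact {X Y Z : Type*} [AddCommGroup X] [Module A X] [AddCommGroup Y]
    [Module A Y] [AddCommGroup Z] [Module A Z] (f : X →ₗ[A] Y) (g : Y →ₗ[A] Z)
    (hg : LinearMap.ker g ≤ LinearMap.range f) :
    Module.length A Y ≤ Module.length A X + Module.length A Z := by
  have h := Module.length_eq_add_of_exact (LinearMap.ker g).subtype g.rangeRestrict
    (Submodule.subtype_injective _) (LinearMap.surjective_rangeRestrict g)
    (by
      rw [LinearMap.exact_iff, LinearMap.ker_rangeRestrict, Submodule.range_subtype])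
  rw [h]
  refine add_le_add ?_ (Module.length_le_of_injective _ (Submodule.subtype_injective _))
  refine (Module.length_le_of_injective (Submodule.inclusion hg)
    (Submodule.inclusion_injective hg)).trans ?_
  exact Module.length_le_of_surjective f.rangeRestrict (LinearMap.surjective_rangeRestrict f)

lemma L_split {S T K : Submodule A M} (h : T ⊓ K ≤ S) :
    Module.length A (M ⧸ S) ≤ Module.length A (M ⧸ (S ⊔ K)) + Module.length A (M ⧸ T) := by
  have h1 : T.comap K.subtype ≤ S.comap K.subtype := fun x hx => h ⟨hx, x.2⟩
  have h2 := length_le_of_rexact (Submodule.mapQ (T.comap K.subtype) S K.subtype h1)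
    (Submodule.factor (le_sup_left : S ≤ S ⊔ K)) (by
      intro y hy
      obtain ⟨y, rfl⟩ := Submodule.mkQ_surjective _ y
      have hy' : y ∈ S ⊔ K := by simpa using hy
      obtain ⟨s, hs, k, hk, rfl⟩ := Submodule.mem_sup.1 hy'
      refine ⟨Submodule.Quotient.mk ⟨k, hk⟩, ?_⟩
      simp [hs])
  refine h2.trans ?_
  rw [add_comm]
  gcongr
  refine Module.length_le_of_injective (Submodule.mapQ (T.comap K.subtype) T K.subtype le_rfl) ?_
  rw [← LinearMap.ker_eq_bot, Submodule.ker_mapQ]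
  simp

lemma L_step (N : Submodule A M) (x : A) (k : ℕ) :
    Module.length A (M ⧸ (N ⊔ Ideal.span {x ^ k} • (⊤ : Submodule A M))) ≤
      k * Module.length A (M ⧸ (N ⊔ Ideal.span {x} • (⊤ : Submodule A M))) := by
  induction k with
  | zero =>
    simp
  | succ k ih =>
    have h1 : (N ⊔ Ideal.span {x} • (⊤ : Submodule A M)) ≤
      (N ⊔ Ideal.span {x ^ (k+1)} • (⊤ : Submodule A M)).comap (LinearMap.lsmul A M (x ^ k)) := by
      refine sup_le ?_ ?_
      · intro y hy
        exact Submodule.mem_sup_left (N.smul_mem _ hy)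
      · rw [Submodule.smul_le]
        intro r hr m _
        obtain ⟨c, rfl⟩ := Ideal.mem_span_singleton'.1 hr
        refine Submodule.mem_sup_right ?_
        have : (LinearMap.lsmul A M (x ^ k)) ((c * x) • m) = x ^ (k+1) • (c • m) := by
          simp only [LinearMap.lsmul_apply, smul_smul]; congr 1; ring
        rw [this]
        exact Submodule.smul_mem_smul (Ideal.mem_span_singleton_self _) trivial
    have h3 : (N ⊔ Ideal.span {x ^ (k+1)} • (⊤ : Submodule A M)) ≤
        N ⊔ Ideal.span {x ^ k} • (⊤ : Submodule A M) := by
      refine sup_le_sup_left (Submodule.smul_mono_left ?_) _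
      rw [Ideal.span_singleton_le_span_singleton]
      exact pow_dvd_pow _ (Nat.le_succ k)
    have h2 := length_le_of_rexact (Submodule.mapQ _ _ (LinearMap.lsmul A M (x ^ k)) h1)
      (Submodule.factor h3) (by
        intro y hy
        obtain ⟨y, rfl⟩ := Submodule.mkQ_surjective _ y
        have hy' : y ∈ N ⊔ Ideal.span {x ^ k} • (⊤ : Submodule A M) := by simpa using hy
        obtain ⟨s, hs, m, hm, rfl⟩ := Submodule.mem_sup.1 hy'
        rw [Submodule.ideal_span_singleton_smul] at hm
        obtain ⟨m, -, rfl⟩ := hm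
        refine ⟨Submodule.Quotient.mk m, ?_⟩
        simp only [Submodule.mapQ_apply, LinearMap.lsmul_apply, Submodule.mkQ_apply]
        rw [Submodule.Quotient.eq]
        refine Submodule.mem_sup_left ?_
        simpa using hs)
    refine h2.trans ?_
    push_cast
    rw [add_mul, one_mul, add_comm]
    gcongr

lemma L_finset (s : Finset A) (k : ℕ) : ∀ (N : Submodule A M),
    Module.length A (M ⧸ (N ⊔ Ideal.span ((fun x => x ^ k) '' (s : Set A)) • (⊤ : Submodule A M))) ≤
      (k ^ s.card : ℕ) * Module.length A (M ⧸ (N ⊔ Ideal.span (s : Set A) • (⊤ : Submodule A M))) := by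
  classical
  induction s using Finset.induction_on with
  | empty =>
    intro N
    rw [Finset.card_empty, pow_zero, Nat.cast_one, one_mul, Finset.coe_empty, Set.image_empty]
  | insert a s ha ih =>
    intro N
    rw [Finset.coe_insert, Set.image_insert_eq, Ideal.span_insert, Ideal.span_insert,
      Submodule.sup_smul, Submodule.sup_smul, ← sup_assoc, ← sup_assoc, Finset.card_insert_of_notMem ha]
    refine (ih _).trans ?_
    rw [pow_succ, Nat.cast_mul, mul_assoc]
    gcongr
    have e : ∀ y : A, N ⊔ Ideal.span {y} • (⊤ : Submodule A M) ⊔ Ideal.span (s : Set A) • ⊤ =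
        (N ⊔ Ideal.span (s : Set A) • ⊤) ⊔ Ideal.span {y} • ⊤ := fun y => sup_right_comm _ _ _
    rw [e, e]
    exact L_step _ a k

lemma span_pow_smul_le {x : A} {q : Ideal A} (h : Ideal.span {x} • (⊤ : Submodule A M) ≤ q • ⊤) (k : ℕ) :
    Ideal.span {x ^ k} • (⊤ : Submodule A M) ≤ q ^ k • ⊤ := by
  induction k with
  | zero => simp
  | succ k ih =>
    rw [← Ideal.span_singleton_pow, pow_succ, Submodule.mul_smul, Ideal.span_singleton_pow]
    refine (smul_mono_right _ h).trans ?_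
    rw [← Submodule.mul_smul, mul_comm, Submodule.mul_smul, pow_succ', Submodule.mul_smul]
    exact smul_mono_right _ ih

end

section
open Polynomial Filter Topology

lemma coeff_nonneg_aux (P : ℚ[X]) (d : ℕ) (hd : P.natDegree ≤ d) (N : ℕ)
    (h : ∀ n : ℕ, N ≤ n → 0 ≤ P.eval (n : ℚ)) : 0 ≤ P.coeff d := by
  have ht : Tendsto (fun n : ℕ => P.eval (n : ℚ) / (n : ℚ) ^ d) atTop (𝓝 (P.coeff d)) := by
    have h1 : ∀ n : ℕ, P.eval (n : ℚ) / (n : ℚ) ^ d =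
        ∑ i ∈ Finset.range (d + 1), P.coeff i * ((n : ℚ) ^ i / (n : ℚ) ^ d) := by
      intro n
      rw [Polynomial.eval_eq_sum_range' (Nat.lt_succ_of_le hd), Finset.sum_div]
      exact Finset.sum_congr rfl fun i _ => by rw [mul_div_assoc]
    simp_rw [h1]
    have h2 : P.coeff d = ∑ i ∈ Finset.range (d + 1), P.coeff i * (if i = d then 1 else 0) := by
      simp
    rw [h2]
    refine tendsto_finsetSum _ fun i hi => ?_
    refine Tendsto.const_mul _ ?_
    split_ifs with hid
    · subst hid
      refine tendsto_const_nhds.congr' ?_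
      filter_upwards [eventually_gt_atTop 0] with n hn
      have : (n : ℚ) ≠ 0 := by positivity
      field_simp
    · have hlt : i < d := by have := Finset.mem_range.1 hi; omega
      exact (tendsto_pow_div_pow_atTop_zero hlt).comp tendsto_natCast_atTop_atTop
  refine ge_of_tendsto ht ?_
  filter_upwards [eventually_ge_atTop N] with n hn
  exact div_nonneg (h n hn) (by positivity)

lemma coeff_taylor_top (P : ℚ[X]) (d : ℕ) (hd : P.natDegree ≤ d) (c : ℚ) :
    (taylor c P).coeff d = P.coeff d := by
  rcases hd.lt_or_eq with h | h
  · rw [coeff_eq_zero_of_natDegree_lt h, coeff_eq_zero_of_natDegree_lt (by simpa using h)]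
  · subst h
    have := Polynomial.leadingCoeff_taylor (f := P) c
    rwa [leadingCoeff, leadingCoeff, natDegree_taylor] at this

lemma coeff_eq_aux (P₁ P₂ : ℚ[X]) (d : ℕ) (h₁ : P₁.natDegree ≤ d) (h₂ : P₂.natDegree ≤ d)
    (N c C : ℕ) (h : ∀ n : ℕ, N ≤ n → P₁.eval (n : ℚ) ≤ P₂.eval (n : ℚ))
    (h' : ∀ n : ℕ, N ≤ n → n * P₂.eval (n : ℚ) ≤ C * (n : ℚ) ^ d + n * P₁.eval ((n + c : ℕ) : ℚ)) :
    P₁.coeff d = P₂.coeff d := by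
  have a := coeff_nonneg_aux (P₂ - P₁) d (natDegree_sub_le_of_le h₂ h₁ |>.trans (by simp)) N
    (fun n hn => by simpa using h n hn)
  have b := coeff_nonneg_aux (Polynomial.C (C : ℚ) * X ^ d + X * (taylor (c : ℚ) P₁ - P₂)) (d + 1)
    (by
      refine natDegree_add_le_of_le ?_ ?_ |>.trans (max_self _).le
      · exact (natDegree_C_mul_X_pow_le _ _).trans (Nat.le_succ d)
      · refine natDegree_mul_le.trans ?_
        have : (taylor (c : ℚ) P₁ - P₂).natDegree ≤ d :=
          (natDegree_sub_le_of_le (by simpa using h₁) h₂).trans (by simp)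
        have := natDegree_X_le (R := ℚ)
        omega) N
    (fun n hn => by
      have := h' n hn
      simp only [eval_add, eval_mul, eval_C, eval_pow, eval_X, eval_sub, taylor_eval]
      push_cast at this
      linarith)
  simp only [coeff_add, coeff_X_mul, coeff_sub, coeff_taylor_top P₁ d h₁, coeff_C_mul, coeff_X_pow] at a b
  simp at b
  linarith
end

section
open IsLocalRing

lemma dim_quot_succ_le {C : Type*} [CommRing C] (a : Ideal C) (h : 0 < idealHeight C a) :
    ringKrullDim (C ⧸ a) + 1 ≤ ringKrullDim C := by
  by_cases hr' : a = ⊤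
  · rw [hr', ringKrullDim_eq_bot_of_subsingleton]
    simp
  have : Nonempty (PrimeSpectrum.zeroLocus (R := C) a) := by
    rwa [Set.nonempty_coe_sort, Set.nonempty_iff_ne_empty, ne_eq,
      PrimeSpectrum.zeroLocus_empty_iff_eq_top]
  have := Ideal.Quotient.nontrivial_iff.mpr hr'
  have := (Ideal.Quotient.mk a).domain_nontrivial
  rw [ringKrullDim_quotient, Order.krullDim_eq_iSup_length, ringKrullDim,
    Order.krullDim_eq_iSup_length, ← WithBot.coe_one, ← WithBot.coe_add,
    ENat.iSup_add, WithBot.coe_le_coe, iSup_le_iff]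
  intro l
  have hp : 0 < Order.height (l.head.1) := by
    refine h.trans_le ?_
    exact iInf₂_le l.head.1 l.head.2
  have hm : ¬ IsMin l.head.1 := by
    rw [← Order.height_eq_zero]; exact hp.ne'
  obtain ⟨p', hp'⟩ := not_isMin_iff.1 hm
  refine le_trans ?_ (le_iSup _ ((l.map Subtype.val (fun _ _ h ↦ h)).cons p' hp'))
  have hlen : ((l.map Subtype.val (fun _ _ h ↦ h)).cons p' hp').length = l.length + 1 := by
    change 0 + l.length + 1 = _
    omega
  rw [hlen]
  simp

lemma exists_params {A : Type*} [CommRing A] [IsNoetherianRing A] [IsLocalRing A]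
    (c I : Ideal A) (hht : 0 < idealHeight (A ⧸ c) (Ideal.map (Ideal.Quotient.mk c) I))
    (d : ℕ) (hdim : ringKrullDim (A ⧸ c) = (d : WithBot ℕ∞)) (hne : c ⊔ I ≠ ⊤) :
    ∃ s : Finset A, s.card + 1 ≤ d ∧ (s : Set A) ⊆ maximalIdeal A ∧
      maximalIdeal A ≤ (c ⊔ I ⊔ Ideal.span (s : Set A)).radical := by
  classical
  have hd := dim_quot_succ_le _ hht
  rw [hdim] at hd
  set a := Ideal.map (Ideal.Quotient.mk c) I with ha
  let f : A →+* (A ⧸ c) ⧸ a := (Ideal.Quotient.mk a).comp (Ideal.Quotient.mk c)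
  have hf : Function.Surjective f :=
    Ideal.Quotient.mk_surjective.comp Ideal.Quotient.mk_surjective
  have hker : RingHom.ker f = c ⊔ I := by
    rw [← RingHom.comap_ker, Ideal.mk_ker, ha,
      Ideal.comap_map_of_surjective _ Ideal.Quotient.mk_surjective, sup_comm]
    congr 1
    exact Ideal.mk_ker
  have : Nontrivial ((A ⧸ c) ⧸ a) := by
    by_contra hnt
    rw [not_nontrivial_iff_subsingleton] at hnt
    refine hne ?_
    rw [← hker, Ideal.eq_top_iff_one, RingHom.mem_ker]
    exact Subsingleton.elim _ _
  have hloc : IsLocalRing ((A ⧸ c) ⧸ a) := IsLocalRing.of_surjective' f hf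
  have hlh : IsLocalHom f := IsLocalHom.of_surjective f hf
  obtain ⟨s, hs, hcard⟩ := Ideal.exists_finset_card_eq_height_of_isNoetherianRing
    (maximalIdeal ((A ⧸ c) ⧸ a))
  have hcd : s.card + 1 ≤ d := by
    rw [← maximalIdeal_height_eq_ringKrullDim, ← hcard] at hd
    exact_mod_cast hd
  let g := Function.surjInv hf
  have hg : ∀ x, f (g x) = x := Function.surjInv_eq hf
  refine ⟨s.image g, (Nat.add_le_add_right Finset.card_image_le 1).trans hcd, ?_, ?_⟩
  · intro x hx
    rw [Finset.coe_image] at hx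
    obtain ⟨y, hy, rfl⟩ := hx
    have hy' : y ∈ maximalIdeal ((A ⧸ c) ⧸ a) := hs.1.2 (Ideal.subset_span hy)
    intro hu
    refine hy' ?_
    rw [← hg y]
    exact hu.map f
  · rw [Ideal.radical_eq_sInf]
    refine le_sInf ?_
    rintro p ⟨hp, hpp⟩
    have hkp : RingHom.ker f ≤ p := by rw [hker]; exact le_sup_left.trans hp
    have hpm : (p.map f).IsPrime := Ideal.map_isPrime_of_surjective hf hkp
    have h1 : Ideal.span (s : Set _) ≤ p.map f := by
      rw [Ideal.span_le]
      intro y hy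
      rw [← hg y]
      refine Ideal.mem_map_of_mem f (hp (Ideal.mem_sup_right (Ideal.subset_span ?_)))
      rw [Finset.coe_image]
      exact ⟨y, hy, rfl⟩
    have h2 := hs.2 ⟨hpm, h1⟩ (le_maximalIdeal hpm.ne_top)
    intro x hx
    have h3 : f x ∈ p.map f := by
      refine h2 ?_
      intro hu
      exact hx (isUnit_of_map_unit f x hu)
    have h4 : x ∈ (p.map f).comap f := h3
    rw [Ideal.comap_map_of_surjective f hf, sup_eq_left.2 (show Ideal.comap f ⊥ ≤ p from hkp)] at h4
    exact h4

lemma bound_aux {A : Type*} [CommRing A] [IsNoetherianRing A] [IsLocalRing A]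
    {M : Type*} [AddCommGroup M] [Module A M] [Module.Finite A M]
    (J : Ideal A) (hJ : J.radical = maximalIdeal A) (I : Ideal A)
    (hht : 0 < idealHeight (A ⧸ Module.annihilator A M)
        (Ideal.map (Ideal.Quotient.mk (Module.annihilator A M)) I))
    (d : ℕ) (hdim : ringKrullDim (A ⧸ Module.annihilator A M) = (d : WithBot ℕ∞)) (u : ℕ)
    (hJf : ∃ N : ℕ, ∀ n, N ≤ n → IsFiniteLength A (M ⧸ (J ^ n • (⊤ : Submodule A M))))
    (q : Ideal A)
    (hqf : IsFiniteLength A (M ⧸ (q • (⊤ : Submodule A M)))) :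
    ∃ C : ℕ, ∀ k : ℕ, (k : ℕ∞) *
      Module.length A (M ⧸ (q ^ k • (⊤ : Submodule A M) ⊔ I ^ u • ⊤)) ≤ (C * k ^ d : ℕ) := by
  set c := Module.annihilator A M with hc
  have hcM : c • (⊤ : Submodule A M) = ⊥ := by
    rw [hc, ← Submodule.annihilator_top, Submodule.annihilator_smul]
  by_cases htop : c ⊔ I ^ u = ⊤
  · refine ⟨0, fun k => ?_⟩
    have h1 : I ^ u • (⊤ : Submodule A M) = ⊤ := by
      have : (c ⊔ I ^ u) • (⊤ : Submodule A M) = ⊤ := by rw [htop]; simp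
      rwa [Submodule.sup_smul, hcM, bot_sup_eq] at this
    have : Subsingleton (M ⧸ (q ^ k • (⊤ : Submodule A M) ⊔ I ^ u • ⊤)) := by
      rw [Submodule.Quotient.subsingleton_iff, h1, sup_top_eq]
    simp
  have hu : u ≠ 0 := by
    rintro rfl
    exact htop (by simp)
  have hne : c ⊔ I ≠ ⊤ := by
    intro h
    exact htop (Ideal.sup_pow_eq_top h)
  obtain ⟨s, hsd, hsm, hrad⟩ := exists_params c I hht d hdim hne
  -- finite length
  have hfin : Module.length A (M ⧸ (I ^ u • ⊤ ⊔ Ideal.span (s : Set A) • (⊤ : Submodule A M))) ≠ ⊤ := by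
    have h1 : J ≤ (c ⊔ I ^ u ⊔ Ideal.span (s : Set A)).radical := by
      refine (Ideal.le_radical.trans hJ.le).trans (hrad.trans ?_)
      rw [Ideal.radical_le_radical_iff]
      refine sup_le (sup_le ?_ ?_) ?_
      · exact (le_sup_left.trans le_sup_left).trans Ideal.le_radical
      · intro x hx
        exact ⟨u, Ideal.mem_sup_left (Ideal.mem_sup_right (Ideal.pow_mem_pow hx u))⟩
      · exact le_sup_right.trans Ideal.le_radical
    obtain ⟨t, ht⟩ := Ideal.exists_pow_le_of_le_radical_of_fg h1 (IsNoetherian.noetherian J)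
    obtain ⟨N, hN⟩ := hJf
    have h2 := Module.length_ne_top_iff.2 (hN (N + t) (Nat.le_add_right _ _))
    refine ne_top_of_le_ne_top h2 (L_mono ?_)
    have h3 : J ^ (N + t) • (⊤ : Submodule A M) ≤ (c ⊔ I ^ u ⊔ Ideal.span (s : Set A)) • ⊤ :=
      Submodule.smul_mono_left ((Ideal.pow_le_pow_right (Nat.le_add_left _ _)).trans ht)
    rwa [Submodule.sup_smul, Submodule.sup_smul, hcM, bot_sup_eq] at h3
  -- a power of the maximal ideal
  obtain ⟨t, ht⟩ : ∃ t : ℕ, maximalIdeal A ^ t • (⊤ : Submodule A M) ≤ q • ⊤ := by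
    have hart := (isFiniteLength_iff_isNoetherian_isArtinian.1 hqf).2
    obtain ⟨t, ht⟩ := IsArtinian.monotone_stabilizes
      (R := A) (M := M ⧸ (q • (⊤ : Submodule A M)))
      ⟨fun n => OrderDual.toDual (maximalIdeal A ^ n • ⊤), fun a b hab =>
        Submodule.smul_mono_left (Ideal.pow_le_pow_right hab)⟩
    have h0 := ht (t + 1) (Nat.le_succ t)
    have h1 : maximalIdeal A ^ t • (⊤ : Submodule A (M ⧸ (q • (⊤ : Submodule A M)))) =
        maximalIdeal A ^ (t + 1) • ⊤ := h0
    have h2 := Submodule.eq_bot_of_le_smul_of_le_jacobson_bot (maximalIdeal A)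
      (maximalIdeal A ^ t • (⊤ : Submodule A (M ⧸ (q • (⊤ : Submodule A M)))))
      (IsNoetherian.noetherian _)
      (by rw [← Submodule.mul_smul, ← pow_succ']; exact h1.le)
      (IsLocalRing.maximalIdeal_le_jacobson _)
    refine ⟨t, ?_⟩
    rw [← Submodule.ker_mkQ (q • (⊤ : Submodule A M)), LinearMap.le_ker_iff_map,
      Submodule.map_smul'', Submodule.map_top, Submodule.range_mkQ, h2]
  have hx : ∀ x ∈ s, ∀ k, Ideal.span {(x ^ t) ^ k} • (⊤ : Submodule A M) ≤ q ^ k • ⊤ := by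
    intro x hx k
    refine span_pow_smul_le ?_ k
    refine le_trans (Submodule.smul_mono_left ?_) ht
    rw [Ideal.span_singleton_le_iff_mem]
    exact Ideal.pow_mem_pow (hsm hx) t
  obtain ⟨l, hl⟩ := ENat.ne_top_iff_exists.1 hfin
  refine ⟨t ^ s.card * l, fun k => ?_⟩
  have key : Module.length A (M ⧸ (q ^ k • (⊤ : Submodule A M) ⊔ I ^ u • ⊤)) ≤
      ((t * k) ^ s.card : ℕ) * (l : ℕ∞) := by
    rw [hl]
    refine le_trans (L_mono ?_) (L_finset s (t * k) (I ^ u • ⊤))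
    refine sup_le le_sup_right (le_sup_of_le_left ?_)
    rw [Submodule.smul_le]
    intro r hr m _
    have : Ideal.span ((fun x => x ^ (t * k)) '' (s : Set A)) ≤
        (q ^ k • (⊤ : Submodule A M)).colon ⊤ := by
      rw [Ideal.span_le]
      rintro _ ⟨x, hxs, rfl⟩
      rw [SetLike.mem_coe, Submodule.mem_colon]
      intro p _
      refine hx x hxs k (Submodule.smul_mem_smul ?_ trivial)
      rw [← pow_mul]
      exact Ideal.mem_span_singleton_self _
    exact Submodule.mem_colon.1 (this hr) m trivial
  rcases Nat.eq_zero_or_pos k with rfl | hk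
  · simp
  calc (k : ℕ∞) * Module.length A (M ⧸ (q ^ k • (⊤ : Submodule A M) ⊔ I ^ u • ⊤))
      ≤ k * (((t * k) ^ s.card : ℕ) * (l : ℕ∞)) := by gcongr
    _ = (t ^ s.card * l * k ^ (s.card + 1) : ℕ) := by push_cast; ring
    _ ≤ _ := by
      have := Nat.mul_le_mul_left (t ^ s.card * l) (Nat.pow_le_pow_right hk hsd)
      exact_mod_cast this
end

/-- If `ht((I + Ann_A M)/Ann_A M) > 0` and `(R)` is an ideal generated
by a set `R` of elements of `J` such that `(R) J^n I^u M = J^{n+1} I^u M` for some fixed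
`u` and all sufficiently large `n` (i.e. `(R)` is a reduction of `J` with respect to
`I^u M`), then `e_A(J; M) = e_A((R); M)`. -/
theorem multiplicity_eq_of_reduction
    (A : Type*) [CommRing A] [IsNoetherianRing A] [IsLocalRing A]
    (M : Type*) [AddCommGroup M] [Module A M] [Module.Finite A M]
    (J : Ideal A) (hJ : J.radical = maximalIdeal A)
    (I : Ideal A)
    (hht : 0 < idealHeight (A ⧸ Module.annihilator A M)
        (Ideal.map (Ideal.Quotient.mk (Module.annihilator A M)) I))
    (d : ℕ) (hdim : modDim A M = (d : WithBot ℕ∞))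
    (R : Set A) (hRJ : R ⊆ (J : Set A))
    (u : ℕ)
    (hred : ∃ N : ℕ, ∀ n : ℕ, N ≤ n →
      (Ideal.span R * J ^ n * I ^ u) • (⊤ : Submodule A M) =
        (J ^ (n + 1) * I ^ u) • (⊤ : Submodule A M)) :
    ∀ e₁ e₂ : ℕ, IsHSMult A M J d e₁ → IsHSMult A M (Ideal.span R) d e₂ →
      e₁ = e₂ := by
  rintro e₁ e₂ ⟨P₁, hd₁, ⟨N₁, h₁⟩, he₁⟩ ⟨P₂, hd₂, ⟨N₂, h₂⟩, he₂⟩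
  obtain ⟨N₀, hred⟩ := hred
  set q := Ideal.span R with hq
  have hqJ : q ≤ J := Ideal.span_le.2 hRJ
  have cast : ∀ S : Submodule A M, IsFiniteLength A (M ⧸ S) →
      ((lenNat A (M ⧸ S) : ℕ) : ℕ∞) = Module.length A (M ⧸ S) := by
    intro S hS
    rw [lenNat, modLength, ← Module.length_eq_height]
    exact ENat.natCast_toNat (Module.length_ne_top_iff.2 hS)
  have hqf : IsFiniteLength A (M ⧸ (q • (⊤ : Submodule A M))) := by
    rw [← Module.length_ne_top_iff]
    refine ne_top_of_le_ne_top
      (Module.length_ne_top_iff.2 (h₂ (N₂ + 1) (Nat.le_add_right _ _)).1) (L_mono ?_)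
    exact Submodule.smul_mono_left (Ideal.pow_le_self (Nat.succ_ne_zero _))
  obtain ⟨C, hC⟩ := bound_aux J hJ I hht d hdim u ⟨N₁, fun n hn => (h₁ n hn).1⟩ q hqf
  obtain ⟨c, hc⟩ := J.exists_pow_inf_eq_pow_smul (I ^ u • (⊤ : Submodule A M))
  have hiter : ∀ k : ℕ, (J ^ (N₀ + k)) • (I ^ u • (⊤ : Submodule A M)) ≤ q ^ k • ⊤ := by
    have : ∀ k : ℕ, (J ^ (N₀ + k)) • (I ^ u • (⊤ : Submodule A M)) =
        q ^ k • (J ^ N₀ • (I ^ u • ⊤)) := by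
      intro k
      induction k with
      | zero => simp
      | succ k ih =>
        have := hred (N₀ + k) (Nat.le_add_right _ _)
        rw [← add_assoc, ← Submodule.mul_smul, ← this, mul_assoc, Submodule.mul_smul,
          Submodule.mul_smul, ih, pow_succ', Submodule.mul_smul]
    intro k
    rw [this k]
    exact smul_mono_right _ le_top
  have hkey : ∀ k : ℕ, J ^ (k + (N₀ + c)) • (⊤ : Submodule A M) ⊓ I ^ u • ⊤ ≤ q ^ k • ⊤ := by
    intro k
    rw [hc _ (by omega), show k + (N₀ + c) - c = N₀ + k by omega]
    exact (smul_mono_right _ inf_le_right).trans (hiter k)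
  have hco := coeff_eq_aux P₁ P₂ d hd₁ hd₂ (N₁ + N₂) (N₀ + c) C
    (by
      intro n hn
      have a₁ := h₁ n (by omega)
      have a₂ := h₂ n (by omega)
      rw [← a₁.2, ← a₂.2]
      have : Module.length A (M ⧸ (J ^ n • (⊤ : Submodule A M))) ≤
          Module.length A (M ⧸ (q ^ n • (⊤ : Submodule A M))) :=
        L_mono (Submodule.smul_mono_left (Ideal.pow_right_mono hqJ n))
      rw [← cast _ a₁.1, ← cast _ a₂.1] at this
      exact_mod_cast this)
    (by
      intro n hn
      have a₁ := h₁ (n + (N₀ + c)) (by omega)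
      have a₂ := h₂ n (by omega)
      rw [← a₁.2, ← a₂.2]
      have h := L_split (hkey n)
      have h' : (n : ℕ∞) * Module.length A (M ⧸ (q ^ n • (⊤ : Submodule A M))) ≤
          (C * n ^ d : ℕ) +
            n * Module.length A (M ⧸ (J ^ (n + (N₀ + c)) • (⊤ : Submodule A M))) := by
        refine (mul_le_mul_right h (n : ℕ∞)).trans ?_
        rw [mul_add]
        exact add_le_add_left (hC n) _
      rw [← cast _ a₁.1, ← cast _ a₂.1] at h'
      exact_mod_cast h')
  have : (e₁ : ℚ) = e₂ := by rw [he₁, he₂, hco]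
  exact_mod_cast this
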